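/- For λ > −1, t ∈ ℝ and integer m ≥ 2, let P_n be the monic orthogonal polynomials of the generalised higher order Freud weight ω(x;t,λ) = |x|^{2λ+1} exp(t x² − x^{2m}). Then for every n ≥ 2m there exist real numbers ρ_{n,0}, ρ_{n,2}, …, ρ_{n,2m} with ρ_{n,0} = n such that the structure relation x P_n′(x) = Σ_{ℓ=0}^{m} ρ_{n,2ℓ} P_{n−2ℓ}(x) holds as an identity of polynomials; equivalently, x P_n′(x) − n P_n(x) lies in the span of P_{n−2}, P_{n−4}, …, P_{n−2m}. -/

import Mathlib

open MeasureTheory Real Polynomial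

/-- The generalised higher order Freud weight `ω(x;t,λ) = |x|^{2λ+1} exp(t x² − x^{2m})`. -/
noncomputable def freudWeight (m : ℕ) (lam t x : ℝ) : ℝ :=
  |x| ^ (2 * lam + 1) * Real.exp (t * x ^ 2 - x ^ (2 * m))

theorem aux_comp_coeff (p : ℝ[X]) (k : ℕ) : (p.comp (-X)).coeff k = (-1) ^ k * p.coeff k := by
  have h : (-X : ℝ[X]) = C (-1) * X := by simp
  rw [h, comp_C_mul_X_coeff, mul_comm]

theorem aux_orth_lt (L : ℝ[X] →ₗ[ℝ] ℝ) (P : ℕ → ℝ[X]) 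
    (hmonic : ∀ n, (P n).Monic) (hdeg : ∀ n, (P n).natDegree = n) (r : ℝ[X]) (n : ℕ) :
    (∀ k < n, L (r * P k) = 0) → ∀ q : ℝ[X], q.degree < n → L (r * q) = 0 := by
  induction n with
  | zero =>
    intro _ q hq
    have : q = 0 := by
      rw [← degree_eq_bot]
      exact (Nat.WithBot.lt_zero_iff).1 (by simpa using hq)
    simp [this]
  | succ n ih =>
    intro h q hq
    have hd : (q - C (q.coeff n) * P n).degree < n := by
      rw [degree_lt_iff_coeff_zero]
      intro k hk
      rcases hk.eq_or_lt with rfl | hk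
      · have h1 : (P n).coeff n = 1 := by
          have := (hmonic n).coeff_natDegree
          rwa [hdeg] at this
        simp [h1]
      · have h1 : (P n).coeff k = 0 := coeff_eq_zero_of_natDegree_lt (by rw [hdeg]; exact hk)
        have h2 : q.coeff k = 0 := (degree_lt_iff_coeff_zero _ _).1 hq k hk
        simp [h1, h2]
    have h1 := ih (fun k hk => h k (by omega)) _ hd
    have h2 := h n (by omega)
    have h3 : r * q = r * (q - C (q.coeff n) * P n) + q.coeff n • (r * P n) := by
      rw [smul_eq_C_mul]; ring
    rw [h3, map_add, map_smul, h1, h2]; simp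

theorem aux_algebra (m : ℕ) (L : ℝ[X] →ₗ[ℝ] ℝ) (P : ℕ → ℝ[X]) (Q : ℝ[X])
    (hmonic : ∀ n, (P n).Monic) (hdeg : ∀ n, (P n).natDegree = n)
    (horth : ∀ j k, j ≠ k → L (P j * P k) = 0)
    (hpos : ∀ p : ℝ[X], L (p * p) = 0 → p = 0)
    (hsym : ∀ p : ℝ[X], L (p.comp (-X)) = L p)
    (hibp : ∀ p : ℝ[X], L (X * derivative p) = L (Q * p))
    (hQ : Q.natDegree ≤ 2 * m) (hQs : Q.comp (-X) = Q) :
    ∀ n : ℕ, 2 * m ≤ n → ∃ ρ : ℕ → ℝ, ρ 0 = (n : ℝ) ∧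
      X * derivative (P n) =
        ∑ ℓ ∈ Finset.range (m + 1), C (ρ (2 * ℓ)) * P (n - 2 * ℓ) := by
  have hPdeg : ∀ n, (P n).degree = n := fun n => by
    rw [degree_eq_natDegree (hmonic n).ne_zero, hdeg]
  have hlead : ∀ n, (P n).coeff n = 1 := fun n => by
    have := (hmonic n).coeff_natDegree
    rwa [hdeg] at this
  have hzero : ∀ (n : ℕ) (r : ℝ[X]), r.degree < n → (∀ k < n, L (r * P k) = 0) → r = 0 :=
    fun n r hr h => hpos r (aux_orth_lt L P hmonic hdeg r n h r hr)
  have hlow : ∀ (n : ℕ) (q : ℝ[X]), q.degree < n → L (P n * q) = 0 := fun n q hq =>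
    aux_orth_lt L P hmonic hdeg (P n) n (fun k hk => horth n k hk.ne') q hq
  have hnd : ∀ p : ℝ[X], (p.comp (-X)).degree ≤ p.degree := by
    intro p
    rw [degree_le_iff_coeff_zero]
    intro k hk
    rw [aux_comp_coeff, coeff_eq_zero_of_degree_lt hk, mul_zero]
  have hpar : ∀ n, (P n).comp (-X) = C ((-1) ^ n) * P n := by
    intro n
    have h := hzero n (C ((-1) ^ n) * (P n).comp (-X) - P n) ?_ ?_
    · conv_rhs => rw [← sub_eq_zero.1 h, ← mul_assoc, ← C_mul, ← mul_pow]
      simp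
    · rw [degree_lt_iff_coeff_zero]
      intro k hk
      rw [coeff_sub, coeff_C_mul, aux_comp_coeff]
      rcases hk.eq_or_lt with rfl | hk
      · rw [hlead, ← mul_assoc, ← mul_pow]; simp
      · have h1 : (P n).coeff k = 0 := coeff_eq_zero_of_natDegree_lt (by rw [hdeg]; exact hk)
        simp [h1]
    · intro k hk
      have h1 : L ((P n).comp (-X) * P k) = 0 := by
        rw [← hsym, mul_comp, comp_assoc]
        simp only [neg_comp, X_comp, neg_neg, comp_X]
        apply hlow
        refine (hnd _).trans_lt ?_
        rw [hPdeg]; exact_mod_cast hk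
      rw [sub_mul, map_sub, horth n k hk.ne', mul_assoc, ← smul_eq_C_mul, map_smul, h1]; simp
  intro n hn
  have key : ∀ k < n, L (X * derivative (P n) * P k) = L (Q * (P n * P k)) := by
    intro k hk
    rw [← hibp, derivative_mul]
    have h1 : L (P n * (X * derivative (P k))) = 0 := by
      apply hlow
      refine lt_of_le_of_lt ?_ (show ((k : ℕ) : WithBot ℕ) < n by exact_mod_cast hk)
      rw [degree_le_iff_coeff_zero]
      intro j hj
      rw [mul_comm]
      have hj' : k < j := by exact_mod_cast hj
      obtain ⟨j, rfl⟩ : ∃ i, j = i + 1 := ⟨j - 1, by omega⟩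
      rw [coeff_mul_X, coeff_derivative, coeff_eq_zero_of_natDegree_lt (by rw [hdeg]; exact hj')]
      simp
    have : X * (derivative (P n) * P k + P n * derivative (P k))
      = X * derivative (P n) * P k + P n * (X * derivative (P k)) := by ring
    rw [this, map_add, h1, add_zero]
  have kodd : ∀ k < n, Odd (n + k) → L (X * derivative (P n) * P k) = 0 := by
    intro k hk ho
    rw [key k hk]
    have h1 := hsym (Q * (P n * P k))
    rw [mul_comp, mul_comp, hQs, hpar, hpar] at h1
    have h2 : Q * (C ((-1) ^ n) * P n * (C ((-1) ^ k) * P k))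
      = ((-1 : ℝ) ^ (n + k)) • (Q * (P n * P k)) := by
      rw [smul_eq_C_mul, pow_add, C_mul]; ring
    rw [h2, map_smul, ho.neg_one_pow, smul_eq_mul] at h1
    linarith
  have kfar : ∀ k, k + 2 * m < n → L (X * derivative (P n) * P k) = 0 := by
    intro k hk
    rw [key k (by omega), show Q * (P n * P k) = P n * (Q * P k) by ring]
    apply hlow
    refine lt_of_le_of_lt degree_le_natDegree ?_
    have := natDegree_mul_le (p := Q) (q := P k)
    rw [hdeg] at this
    exact_mod_cast (by omega : (Q * P k).natDegree < n)
  have hne : ∀ k, L (P k * P k) ≠ 0 := fun k h => (hmonic k).ne_zero (hpos _ h)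
  set ρ : ℕ → ℝ := fun j => if j = 0 then (n : ℝ) else
    L (X * derivative (P n) * P (n - j)) / L (P (n - j) * P (n - j)) with hρ
  refine ⟨ρ, by simp [hρ], ?_⟩
  rw [← sub_eq_zero]
  apply hzero n
  · rw [degree_lt_iff_coeff_zero]
    intro k hk
    rw [Finset.sum_range_succ', coeff_sub, coeff_add, finsetSum_coeff]
    rw [Finset.sum_eq_zero]
    · simp only [mul_zero, Nat.sub_zero, hρ, if_true, coeff_C_mul]
      rw [mul_comm X]
      cases k with
      | zero =>
        obtain rfl : n = 0 := by omega
        simp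
      | succ j =>
        rw [coeff_mul_X, coeff_derivative]
        rcases hk.eq_or_lt with h | h
        · rw [h, hlead]; push_cast; ring
        · rw [coeff_eq_zero_of_natDegree_lt (by rw [hdeg]; exact h)]; simp
    · intro i hi
      rw [Finset.mem_range] at hi
      rw [coeff_C_mul, coeff_eq_zero_of_natDegree_lt (by rw [hdeg]; omega), mul_zero]
  · intro k hk
    have hs : (X * derivative (P n) - ∑ ℓ ∈ Finset.range (m + 1), C (ρ (2 * ℓ)) * P (n - 2 * ℓ)) * P k
      = X * derivative (P n) * P k
        - ∑ ℓ ∈ Finset.range (m + 1), (ρ (2 * ℓ)) • (P (n - 2 * ℓ) * P k) := by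
      rw [sub_mul, Finset.sum_mul]
      simp only [smul_eq_C_mul, mul_assoc]
    rw [hs, map_sub, map_sum]
    simp only [map_smul, smul_eq_mul]
    by_cases hc : ∃ ℓ ∈ Finset.range (m + 1), k = n - 2 * ℓ
    · obtain ⟨l, hl, rfl⟩ := hc
      rw [Finset.mem_range] at hl
      rw [Finset.sum_eq_single l]
      · have hl0 : 2 * l ≠ 0 := by omega
        simp only [hρ, if_neg hl0]
        rw [div_mul_cancel₀ _ (hne _), sub_self]
      · intro b hb hbl
        rw [Finset.mem_range] at hb
        rw [horth _ _ (by omega), mul_zero]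
      · intro h; exact absurd (Finset.mem_range.2 hl) h
    · rw [Finset.sum_eq_zero, sub_zero]
      · by_cases ho : Odd (n + k)
        · exact kodd k hk ho
        · apply kfar
          by_contra hlt
          apply hc
          rw [Nat.not_odd_iff_even] at ho
          obtain ⟨a, ha⟩ := ho
          exact ⟨n - a, Finset.mem_range.2 (by omega), by omega⟩
      · intro i hi
        rw [horth _ _ (fun h => hc ⟨i, hi, h.symm⟩), mul_zero]

theorem aux_even (m : ℕ) (lam t x : ℝ) : freudWeight m lam t (-x) = freudWeight m lam t x := by
  simp [freudWeight, pow_mul]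

theorem aux_meas (m : ℕ) (lam t : ℝ) : Measurable (freudWeight m lam t) := by
  unfold freudWeight
  fun_prop

theorem aux_exp_bound (m : ℕ) (hm : 2 ≤ m) (t x : ℝ) :
    t * x ^ 2 - x ^ (2 * m) ≤ ((t + 1) ^ 2 / 4 + 1) + (-1 * x ^ 2) := by
  rw [pow_mul]
  have hy : 0 ≤ x ^ 2 := sq_nonneg x
  generalize x ^ 2 = y at *
  have h : y ^ 2 - 1 ≤ y ^ m := by
    rcases le_total 1 y with h | h
    · linarith [pow_le_pow_right₀ h hm]
    · have := pow_nonneg hy m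
      nlinarith
  nlinarith [sq_nonneg (y - (t + 1) / 2)]

theorem aux_base_int (s : ℝ) (hs : -1 < s) :
    Integrable fun x : ℝ => |x| ^ s * Real.exp (-1 * x ^ 2) := by
  have h0 : IntegrableOn (fun x : ℝ => |x| ^ s * Real.exp (-1 * x ^ 2)) (Set.Ioi 0) := by
    refine (integrableOn_rpow_mul_exp_neg_mul_sq one_pos hs).congr_fun ?_ measurableSet_Ioi
    intro x hx
    simp only [abs_of_pos (Set.mem_Ioi.1 hx)]
  rw [← integrableOn_univ, ← Set.Iic_union_Ioi (a := (0 : ℝ)), integrableOn_union]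
  refine ⟨?_, h0⟩
  rw [integrableOn_Iic_iff_integrableOn_Iio]
  have := h0.comp_neg
  simpa using this

theorem aux_mono_int (m : ℕ) (hm : 2 ≤ m) (lam t : ℝ) (hlam : -1 < lam) (k : ℕ) :
    Integrable fun x : ℝ => x ^ k * freudWeight m lam t x := by
  have hb := (aux_base_int (k + (2 * lam + 1)) (by
    have : (0 : ℝ) ≤ k := Nat.cast_nonneg k
    linarith)).const_mul (Real.exp ((t + 1) ^ 2 / 4 + 1))
  refine hb.mono' ?_ ?_
  · exact ((measurable_id.pow_const k).mul (aux_meas m lam t)).aestronglyMeasurable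
  · have : ∀ᵐ x : ℝ, x ≠ 0 := by
      simp [ae_iff]
    filter_upwards [this] with x hx
    have hx' : 0 < |x| := abs_pos.2 hx
    rw [Real.rpow_add hx', Real.rpow_natCast, freudWeight, norm_mul, norm_mul, norm_pow,
      Real.norm_eq_abs, Real.norm_of_nonneg (Real.rpow_nonneg hx'.le _),
      Real.norm_of_nonneg (Real.exp_pos _).le]
    have h1 := Real.exp_le_exp.2 (aux_exp_bound m hm t x)
    rw [Real.exp_add] at h1
    have h2 : 0 ≤ |x| ^ k * |x| ^ (2 * lam + 1) := by positivity
    nlinarith [mul_le_mul_of_nonneg_left h1 h2]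

theorem aux_poly_int (m : ℕ) (hm : 2 ≤ m) (lam t : ℝ) (hlam : -1 < lam) (p : ℝ[X]) :
    Integrable fun x : ℝ => p.eval x * freudWeight m lam t x := by
  induction p using Polynomial.induction_on' with
  | add p q hp hq => 
    simp only [eval_add, add_mul]
    exact hp.add hq
  | monomial n a =>
    simpa [mul_assoc] using (aux_mono_int m hm lam t hlam n).const_mul a

theorem aux_deriv (m : ℕ) (lam t : ℝ) (p : ℝ[X]) (x : ℝ) (hx : x ≠ 0) :
    HasDerivAt (fun x => (X * p).eval x * freudWeight m lam t x)
      ((X * derivative p + (C (2 * t) * X ^ 2 - C (2 * (m : ℝ)) * X ^ (2 * m) + C (2 * lam + 2)) * p).eval x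
        * freudWeight m lam t x) x := by
  have hx' : |x| ≠ 0 := abs_ne_zero.2 hx
  have h1 := (hasDerivAt_abs hx).rpow_const (p := 2 * lam + 1) (Or.inl hx')
  have h2 := (((hasDerivAt_pow 2 x).const_mul t).sub (hasDerivAt_pow (2 * m) x)).exp
  have h3 := (X * p).hasDerivAt x
  refine (h3.mul (h1.mul h2)).congr_deriv ?_
  have h4' : ((SignType.sign x : SignType) : ℝ) = x / |x| := by
    rcases hx.lt_or_gt with h | h
    · simp [h, abs_of_neg h, div_neg, hx]
    · simp [h, abs_of_pos h, hx]
  have h5 : x * (x / |x| * (2 * lam + 1) * |x| ^ (2 * lam + 1 - 1))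
      = (2 * lam + 1) * |x| ^ (2 * lam + 1) := by
    rw [Real.rpow_sub_one hx']
    have : |x| * |x| = x * x := abs_mul_abs_self x
    field_simp
    rw [sq_abs]
  have h6 : x * x ^ (2 * m - 1) * (2 * m : ℝ) = x ^ (2 * m) * (2 * m) := by
    rcases Nat.eq_zero_or_pos m with rfl | hm
    · simp
    · rw [← pow_succ', Nat.sub_add_cancel (by omega)]
  rw [h4']
  simp only [freudWeight, derivative_mul, derivative_X, eval_add, eval_mul, eval_sub, eval_C,
    eval_X, eval_pow, eval_one, one_mul, Pi.sub_apply, Pi.mul_apply]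
  push_cast
  linear_combination (p.eval x * Real.exp (t * x ^ 2 - x ^ (2 * m))) * h5
    - (p.eval x * Real.exp (t * x ^ 2 - x ^ (2 * m)) * |x| ^ (2 * lam + 1)) * h6

theorem aux_cont (m : ℕ) (lam t : ℝ) (hlam : -1 < lam) (p : ℝ[X]) :
    ContinuousAt (fun x => (X * p).eval x * freudWeight m lam t x) 0 := by
  have hg : Continuous fun x : ℝ =>
      |x| ^ (2 * lam + 2) * ‖p.eval x * Real.exp (t * x ^ 2 - x ^ (2 * m))‖ := by
    refine Continuous.mul ?_ (by fun_prop)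
    exact continuous_abs.rpow_const (fun x => Or.inr (by linarith))
  have hg0 := hg.tendsto 0
  rw [abs_zero, Real.zero_rpow (by linarith), zero_mul] at hg0
  unfold ContinuousAt
  simp only [eval_mul, eval_X, zero_mul]
  refine squeeze_zero_norm ?_ hg0
  intro x
  rcases eq_or_ne x 0 with rfl | hx
  · simp only [zero_mul, norm_zero]; positivity
  · have hx' : 0 < |x| := abs_pos.2 hx
    rw [show 2 * lam + 2 = (2 * lam + 1) + 1 by ring, Real.rpow_add_one hx'.ne', freudWeight]
    simp only [norm_mul, Real.norm_eq_abs, abs_abs, abs_of_nonneg (Real.rpow_nonneg hx'.le _)]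
    apply le_of_eq; ring

theorem aux_ibp (m : ℕ) (hm : 2 ≤ m) (lam t : ℝ) (hlam : -1 < lam) (p : ℝ[X]) :
    ∫ x, (X * derivative p + (C (2 * t) * X ^ 2 - C (2 * (m : ℝ)) * X ^ (2 * m)
      + C (2 * lam + 2)) * p).eval x * freudWeight m lam t x = 0 := by
  have hi := aux_poly_int m hm lam t hlam (X * derivative p +
    (C (2 * t) * X ^ 2 - C (2 * (m : ℝ)) * X ^ (2 * m) + C (2 * lam + 2)) * p)
  have hi0 := aux_poly_int m hm lam t hlam (X * p)
  have hc := aux_cont m lam t hlam p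
  have hd := aux_deriv m lam t p
  have ht := tendsto_zero_of_hasDerivAt_of_integrableOn_Ioi (a := 0)
    (fun x hx => hd x (ne_of_gt hx)) hi.integrableOn hi0.integrableOn
  have hb := tendsto_zero_of_hasDerivAt_of_integrableOn_Iic (a := -1)
    (fun x hx => hd x (by have := Set.mem_Iic.1 hx; intro h; linarith))
    hi.integrableOn hi0.integrableOn
  have e1 := integral_Ioi_of_hasDerivAt_of_tendsto hc.continuousWithinAt
    (fun x hx => hd x (ne_of_gt hx)) hi.integrableOn ht
  have e2 := integral_Iic_of_hasDerivAt_of_tendsto hc.continuousWithinAt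
    (fun x hx => hd x (ne_of_lt hx)) hi.integrableOn hb
  rw [← intervalIntegral.integral_Iic_add_Ioi (b := 0) hi.integrableOn hi.integrableOn, e1, e2]
  simp

theorem aux_pos (m : ℕ) (hm : 2 ≤ m) (lam t : ℝ) (hlam : -1 < lam) (p : ℝ[X])
    (h : ∫ x, (p * p).eval x * freudWeight m lam t x = 0) : p = 0 := by
  have hw : ∀ x, 0 ≤ freudWeight m lam t x := fun x => by unfold freudWeight; positivity
  rw [integral_eq_zero_iff_of_nonneg (fun x => by
    simp only [eval_mul, Pi.zero_apply]; exact mul_nonneg (mul_self_nonneg _) (hw x))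
    (aux_poly_int m hm lam t hlam _)] at h
  have h0 : ∀ᵐ x : ℝ, x ≠ 0 := by simp [ae_iff]
  have h1 : (fun x => p.eval x) =ᵐ[volume] fun _ => (0 : ℝ) := by
    filter_upwards [h, h0] with x hx hx0
    have hx' : 0 < |x| := abs_pos.2 hx0
    have : 0 < freudWeight m lam t x := by unfold freudWeight; positivity
    simpa [this.ne'] using hx
  have h2 := (Continuous.ae_eq_iff_eq volume p.continuous continuous_const).1 h1
  exact Polynomial.funext fun x => by simpa using congrFun h2 x

/-- The moment functional of the weight. -/
noncomputable def auxL (m : ℕ) (hm : 2 ≤ m) (lam t : ℝ) (hlam : -1 < lam) : ℝ[X] →ₗ[ℝ] ℝ where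
  toFun p := ∫ x, p.eval x * freudWeight m lam t x
  map_add' p q := by
    simp only [eval_add, add_mul]
    exact integral_add (aux_poly_int m hm lam t hlam p) (aux_poly_int m hm lam t hlam q)
  map_smul' c p := by
    simp only [eval_smul, smul_eq_mul, mul_assoc, RingHom.id_apply]
    exact integral_const_mul _ _

/-- For `λ > −1`, `t ∈ ℝ` and integer `m ≥ 2`, the monic orthogonal
polynomials of the generalised higher order Freud weight satisfy, for every `n ≥ 2m`, the
structure relation `x P_n′(x) = Σ_{ℓ=0}^{m} ρ_{n,2ℓ} P_{n−2ℓ}(x)` with `ρ_{n,0} = n`. -/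
theorem structure_relation (m : ℕ) (hm : 2 ≤ m) (lam t : ℝ) (hlam : -1 < lam)
    (P : ℕ → Polynomial ℝ)
    (hmonic : ∀ n, (P n).Monic) (hdeg : ∀ n, (P n).natDegree = n)
    (horth : ∀ j k, j ≠ k →
      ∫ x : ℝ, (P j).eval x * (P k).eval x * freudWeight m lam t x = 0) :
    ∀ n : ℕ, 2 * m ≤ n → ∃ ρ : ℕ → ℝ, ρ 0 = (n : ℝ) ∧
      X * derivative (P n) =
        ∑ ℓ ∈ Finset.range (m + 1), C (ρ (2 * ℓ)) * P (n - 2 * ℓ) := by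
  refine aux_algebra m (auxL m hm lam t hlam) P
    (-(C (2 * t) * X ^ 2 - C (2 * (m : ℝ)) * X ^ (2 * m) + C (2 * lam + 2))) hmonic hdeg
    ?_ ?_ ?_ ?_ ?_ ?_
  · intro j k hjk
    simpa [auxL] using horth j k hjk
  · intro p hp
    exact aux_pos m hm lam t hlam p hp
  · intro p
    change ∫ x, (p.comp (-X)).eval x * freudWeight m lam t x
      = ∫ x, p.eval x * freudWeight m lam t x
    rw [← integral_neg_eq_self]
    simp [aux_even]
  · intro p
    have h : auxL m hm lam t hlam (X * derivative p + (C (2 * t) * X ^ 2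
      - C (2 * (m : ℝ)) * X ^ (2 * m) + C (2 * lam + 2)) * p) = 0 :=
      aux_ibp m hm lam t hlam p
    rw [map_add] at h
    rw [neg_mul, map_neg]
    linarith
  · rw [natDegree_neg]
    compute_degree
    omega
  · simp [pow_mul]
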